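/- The functions Z₀ and Z₁ satisfy Tutte's equation with one catalytic variable: for all u ≠ 0 in a neighborhood of 0 in ℂ, (ν_c² − 1)^{−1}·( ν_c·ΔZ₀(u) − Z₁(u) ) = t_c·( Δ²Z₀(u) + (ΔZ₀(u))² ) + u, where ΔZ₀(u) = (Z₀(u) − 1)/u and Δ²Z₀(u) = (Z₀(u) − 1 − z_{1,0}·u)/u², with z_{1,0} = Z₀′(0). -/

import Mathlib

noncomputable def nuc : ℝ := 1 + 2 * Real.sqrt 7

noncomputable def tc : ℝ := Real.sqrt 10 / (8 * (7 + Real.sqrt 7) ^ ((3:ℝ)/2))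

noncomputable def uc : ℝ := (6/5) * (7 + Real.sqrt 7) * tc

/-- The rational parametrization `û` of the `u`-variable. -/
noncomputable def uhat (H : ℂ) : ℂ :=
  ((uc : ℂ) / 3) * H * (10 - 12 * H + 6 * H ^ 2 - H ^ 3)

/-- The rational parametrization `Ẑ₀`. -/
noncomputable def Z0hat (H : ℂ) : ℂ :=
  (1/10) * (1 - (1 - (Real.sqrt 7 : ℂ)) * H + 3 * H ^ 2 - H ^ 3)
    * (10 - 12 * H + 6 * H ^ 2 - H ^ 3)

/-- The rational parametrization `Ẑ₁`. -/
noncomputable def Z1hat (H : ℂ) : ℂ :=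
  (3 / (10 * (uc : ℂ))) *
    ((Real.sqrt 7 : ℂ) - 1 + H - 3 * (4 - 3 * H + H ^ 2) / (10 - 12 * H + 6 * H ^ 2 - H ^ 3))

/-- The rational parametrization `Â`. -/
noncomputable def Ahat (H : ℂ) : ℂ :=
  (1/10) * ((((3:ℝ)/2) ^ ((7:ℝ)/3) : ℝ) : ℂ) * (9 - 8 * H + 3 * H ^ 2) / (3 - 3 * H + H ^ 2) ^ 2

open Filter
open scoped Topology

/-!
The constants satisfy `ν_c² − 1 = 9/(10 u_c²)` and `t_c = 100 u_c³/27`. Expanding `ΔẐ₀`, `Δ²Ẑ₀` and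
`Ẑ₁` in partial fractions with respect to the cubic factor of `û`, every term of Tutte's equation
carries the scalar `u_c/3`; what is left is a rational identity in `H` and `s = √7` that only uses
`s² = 7`. As `û` is a local homeomorphism at `0`, the identity in `H` transfers to `u`.
-/

section InverseFunction

variable {𝕜 E : Type*} [NontriviallyNormedField 𝕜] [CompleteSpace 𝕜]
  [NormedAddCommGroup E] [NormedSpace 𝕜 E]

theorem hasDerivAt_of_hasDerivAt_comp {f : 𝕜 → 𝕜} {g : 𝕜 → E} {f' a : 𝕜} {gf' : E}
    (hf : HasStrictDerivAt f f' a) (hf' : f' ≠ 0) (hgf : HasDerivAt (g ∘ f) gf' a) :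
    HasDerivAt g (f'⁻¹ • gf') (f a) := by
  have hinv : hf.localInverse f f' a hf' (f a) = a :=
    (hf.hasStrictFDerivAt_equiv hf').localInverse_apply_image
  have hcomp := hgf.scomp_of_eq (f a) (hf.to_localInverse hf').hasDerivAt hinv.symm
  refine hcomp.congr_of_eventuallyEq ?_
  filter_upwards [hf.eventually_right_inverse hf'] with y hy
  simp only [Function.comp_apply, hy]

end InverseFunction

theorem uc_pos : 0 < uc := by
  unfold uc tc
  positivity

theorem ofReal_uc_ne_zero : (uc : ℂ) ≠ 0 :=
  Complex.ofReal_ne_zero.2 uc_pos.ne'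

theorem uc_sq : uc ^ 2 = 9 / (40 * (7 + √7)) := by
  have hpow : ((7 + √7) ^ ((3 : ℝ) / 2)) ^ 2 = (7 + √7) ^ 3 := by
    rw [← Real.rpow_mul_natCast (by positivity), ← Real.rpow_natCast]
    norm_num
  unfold uc tc
  rw [mul_pow, div_pow, mul_pow, mul_pow, hpow, Real.sq_sqrt (by norm_num)]
  field_simp
  norm_num

theorem inv_nuc_sq_sub_one : (nuc ^ 2 - 1)⁻¹ = 10 / 9 * uc ^ 2 := by
  have hnuc : nuc ^ 2 - 1 = 4 * (7 + √7) := by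
    unfold nuc
    linear_combination 4 * Real.sq_sqrt (show (0 : ℝ) ≤ 7 by norm_num)
  rw [hnuc, uc_sq]
  field_simp
  norm_num

theorem tc_eq : tc = 100 / 27 * uc ^ 3 := by
  rw [pow_succ, uc_sq, uc]
  field_simp
  ring

/-- The factor shared by `û` and `Ẑ₀`, which is also the denominator of `Ẑ₁`. It is defined over any
commutative ring so that the identity behind Tutte's equation can be stated over a general field. -/
def cubicFactor {R : Type*} [CommRing R] (H : R) : R :=
  10 - 12 * H + 6 * H ^ 2 - H ^ 3

theorem uhat_eq_mul_cubicFactor (H : ℂ) : uhat H = uc / 3 * H * cubicFactor H :=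
  rfl

theorem uhat_ne_zero_iff {H : ℂ} : uhat H ≠ 0 ↔ H ≠ 0 ∧ cubicFactor H ≠ 0 := by
  simp [uhat_eq_mul_cubicFactor, uc_pos.ne']

theorem Z0hat_eq_mul_cubicFactor (H : ℂ) :
    Z0hat H = 1 / 10 * (1 - (1 - √7) * H + 3 * H ^ 2 - H ^ 3) * cubicFactor H :=
  rfl

theorem Z1hat_eq_sub_div_cubicFactor (H : ℂ) :
    Z1hat H = 3 / (10 * uc) * (√7 - 1 + H - 3 * (4 - 3 * H + H ^ 2) / cubicFactor H) :=
  rfl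

theorem Z0hat_sub_one_div_uhat {H : ℂ} (hH : uhat H ≠ 0) :
    (Z0hat H - 1) / uhat H =
      3 / (10 * uc) * (√7 - 1 + 3 * H - H ^ 2 - (12 - 6 * H + H ^ 2) / cubicFactor H) := by
  obtain ⟨hH₀, hcubic⟩ := uhat_ne_zero_iff.1 hH
  have huc := ofReal_uc_ne_zero
  rw [Z0hat_eq_mul_cubicFactor, uhat_eq_mul_cubicFactor]
  field_simp
  rw [cubicFactor]
  ring

-- The coefficient of the subtracted linear term is `z_{1,0} = Z₀′(0)`.
theorem Z0hat_sub_taylor_div_uhat_sq {H : ℂ} (hH : uhat H ≠ 0) :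
    (Z0hat H - 1 - 3 / (10 * uc) * (√7 - 11 / 5) * uhat H) / uhat H ^ 2 =
      9 / (50 * uc ^ 2) *
        (5 * (3 - H) / cubicFactor H - (42 - 31 * H + 6 * H ^ 2) / cubicFactor H ^ 2) := by
  obtain ⟨hH₀, hcubic⟩ := uhat_ne_zero_iff.1 hH
  have huc := ofReal_uc_ne_zero
  rw [Z0hat_eq_mul_cubicFactor, uhat_eq_mul_cubicFactor]
  field_simp
  rw [cubicFactor]
  ring

theorem tutte_equation_normalized {K : Type*} [Field K] {s H : K} (hs : s ^ 2 = 7)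
    (hcubic : cubicFactor H ≠ 0) :
    (1 + 2 * s) * (s - 1 + 3 * H - H ^ 2 - (12 - 6 * H + H ^ 2) / cubicFactor H)
        - (s - 1 + H - 3 * (4 - 3 * H + H ^ 2) / cubicFactor H) =
      2 * (5 * (3 - H) / cubicFactor H - (42 - 31 * H + 6 * H ^ 2) / cubicFactor H ^ 2)
        + (s - 1 + 3 * H - H ^ 2 - (12 - 6 * H + H ^ 2) / cubicFactor H) ^ 2
        + H * cubicFactor H := by
  field_simp
  rw [cubicFactor]
  linear_combination (10 - 12 * H + 6 * H ^ 2 - H ^ 3) ^ 2 * hs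

theorem tutte_equation_parametrized {H : ℂ} (hH : uhat H ≠ 0) :
    ((nuc : ℂ) ^ 2 - 1)⁻¹ * ((nuc : ℂ) * ((Z0hat H - 1) / uhat H) - Z1hat H) =
      (tc : ℂ) * ((Z0hat H - 1 - 3 / (10 * uc) * (√7 - 11 / 5) * uhat H) / uhat H ^ 2
        + ((Z0hat H - 1) / uhat H) ^ 2) + uhat H := by
  have hsqrt : (√7 : ℂ) ^ 2 = 7 := by exact_mod_cast Real.sq_sqrt (show (0 : ℝ) ≤ 7 by norm_num)
  have hnuc : (nuc : ℂ) = 1 + 2 * √7 := by simp [nuc]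
  have hinv : ((nuc : ℂ) ^ 2 - 1)⁻¹ = 10 / 9 * (uc : ℂ) ^ 2 := by
    simpa using congrArg Complex.ofReal inv_nuc_sq_sub_one
  have htc : (tc : ℂ) = 100 / 27 * (uc : ℂ) ^ 3 := by simp [tc_eq]
  have hnormalized := tutte_equation_normalized hsqrt (uhat_ne_zero_iff.1 hH).2
  rw [Z0hat_sub_one_div_uhat hH, Z0hat_sub_taylor_div_uhat_sq hH,
    Z1hat_eq_sub_div_cubicFactor, hinv, hnuc, htc, uhat_eq_mul_cubicFactor]
  have huc := ofReal_uc_ne_zero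
  calc
    _ = (uc : ℂ) / 3 * _ := by field_simp; ring
    _ = (uc : ℂ) / 3 * _ := congrArg _ hnormalized
    _ = _ := by field_simp; ring

theorem uhat_zero : uhat 0 = 0 := by
  simp [uhat]

theorem hasStrictDerivAt_cubicFactor {𝕜 : Type*} [NontriviallyNormedField 𝕜] (H : 𝕜) :
    HasStrictDerivAt cubicFactor (-12 + 12 * H - 3 * H ^ 2) H := by
  have h := ((((hasStrictDerivAt_id H).const_mul 12).const_sub 10).add
    ((hasStrictDerivAt_pow 2 H).const_mul 6)).sub (hasStrictDerivAt_pow 3 H)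
  refine h.congr_deriv ?_
  push_cast
  ring

theorem hasStrictDerivAt_uhat_zero : HasStrictDerivAt uhat (10 * uc / 3) 0 := by
  have h := ((hasStrictDerivAt_id (0 : ℂ)).const_mul (uc / 3 : ℂ)).mul
    (hasStrictDerivAt_cubicFactor 0)
  refine h.congr_deriv ?_
  simp only [cubicFactor, id_eq]
  ring

theorem hasDerivAt_Z0hat_zero : HasDerivAt Z0hat (√7 - 11 / 5) 0 := by
  have hcofactor := (((((hasDerivAt_id (0 : ℂ)).const_mul (1 - √7 : ℂ)).const_sub 1).add
    ((hasDerivAt_pow 2 0).const_mul 3)).sub (hasDerivAt_pow 3 0)).const_mul (1 / 10)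
  have h := hcofactor.mul (hasStrictDerivAt_cubicFactor 0).hasDerivAt
  refine h.congr_deriv ?_
  simp only [cubicFactor, id_eq, Pi.add_apply, Pi.sub_apply]
  ring

theorem ten_mul_uc_div_three_ne_zero : 10 * (uc : ℂ) / 3 ≠ 0 := by
  simpa using ofReal_uc_ne_zero

theorem map_uhat_nhds_zero : map uhat (𝓝 0) = 𝓝 0 := by
  simpa only [uhat_zero] using hasStrictDerivAt_uhat_zero.map_nhds_eq ten_mul_uc_div_three_ne_zero

theorem hasDerivAt_zero_of_comp_uhat_eq_Z0hat {Z0 : ℂ → ℂ}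
    (hZ0 : ∀ᶠ H in 𝓝 0, Z0 (uhat H) = Z0hat H) :
    HasDerivAt Z0 (3 / (10 * uc) * (√7 - 11 / 5)) 0 := by
  have hcomp : HasDerivAt (Z0 ∘ uhat) (√7 - 11 / 5) 0 :=
    hasDerivAt_Z0hat_zero.congr_of_eventuallyEq hZ0
  have h := hasDerivAt_of_hasDerivAt_comp hasStrictDerivAt_uhat_zero
    ten_mul_uc_div_three_ne_zero hcomp
  simpa only [uhat_zero, inv_div, smul_eq_mul] using h

/-- Tutte's equation with one catalytic variable for `Z₀` and `Z₁`:
for all `u ≠ 0` in a neighborhood of `0`,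
`(ν_c² − 1)⁻¹ (ν_c ΔZ₀(u) − Z₁(u)) = t_c (Δ²Z₀(u) + (ΔZ₀(u))²) + u`,
where `ΔZ₀(u) = (Z₀(u) − 1)/u`, `Δ²Z₀(u) = (Z₀(u) − 1 − z_{1,0} u)/u²`, `z_{1,0} = Z₀′(0)`. -/
theorem statement19 (Z0 Z1 : ℂ → ℂ) (z10 : ℂ)
    -- `Z₀ = Ẑ₀ ∘ û⁻¹` and `Z₁ = Ẑ₁ ∘ û⁻¹` near `0`
    (hZ0 : ∀ᶠ H in nhds (0 : ℂ), Z0 (uhat H) = Z0hat H)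
    (hZ1 : ∀ᶠ H in nhds (0 : ℂ), Z1 (uhat H) = Z1hat H)
    (hz10 : deriv Z0 0 = z10) :
    ∀ᶠ u in nhdsWithin (0 : ℂ) {(0 : ℂ)}ᶜ,
      ((nuc : ℂ) ^ 2 - 1)⁻¹ * ((nuc : ℂ) * ((Z0 u - 1) / u) - Z1 u)
        = (tc : ℂ) * ((Z0 u - 1 - z10 * u) / u ^ 2 + ((Z0 u - 1) / u) ^ 2) + u := by
  have hz : z10 = 3 / (10 * uc) * (√7 - 11 / 5) := by
    rw [← hz10, (hasDerivAt_zero_of_comp_uhat_eq_Z0hat hZ0).deriv]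
  rw [eventually_nhdsWithin_iff, ← map_uhat_nhds_zero, eventually_map]
  filter_upwards [hZ0, hZ1] with H hZ0H hZ1H huhat
  rw [hZ0H, hZ1H, hz]
  exact tutte_equation_parametrized huhat
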